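/- Let S ⊆ ℕ be a finite set of even cardinality. Then Σ_{𝒫 ∈ π₂(S)} sgn(𝒫) = 1. -/

import Mathlib

/-- A perfect matching of a finite set `S`: a partition of `S` into blocks of cardinality `2`.
The empty set has `∅` as its unique perfect matching. -/
def IsPerfectMatching {α : Type*} [DecidableEq α] (S : Finset α) (M : Finset (Finset α)) : Prop :=
  (∀ b ∈ M, b.card = 2) ∧ (∀ b ∈ M, ∀ c ∈ M, b ≠ c → Disjoint b c) ∧ M.sup id = S

open Classical in
/-- `π₂ S`: the finset of all perfect matchings of `S`. -/
noncomputable def perfMatchings {α : Type*} [DecidableEq α] (S : Finset α) :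
    Finset (Finset (Finset α)) :=
  S.powerset.powerset.filter (fun M => IsPerfectMatching S M)

/-- The larger element of a block of natural numbers. -/
def bmax (b : Finset ℕ) : ℕ := b.sup id

/-- The smaller element of a block of natural numbers. -/
def bmin (b : Finset ℕ) : ℕ := (b.erase (bmax b)).sup id

/-- The block of the matching `M` containing `v`. -/
def blockOf (M : Finset (Finset ℕ)) (v : ℕ) : Finset ℕ := (M.filter (fun b => v ∈ b)).sup id

/-- The blocks `P_1 | P_2 | … | P_m` of the matching `M` in canonical order, i.e. listed
in increasing order of their larger elements. -/
def blockList (M : Finset (Finset ℕ)) : List (Finset ℕ) :=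
  ((M.image bmax).sort (· ≤ ·)).map (blockOf M)

/-- The bottom row `[s_{1_1}, s_{1_2}, s_{2_1}, s_{2_2}, …]` of the two-line representation of
the permutation `σ_𝒫` associated to the canonical form of the matching `M`. -/
def flatList (M : Finset (Finset ℕ)) : List ℕ :=
  (blockList M).foldr (fun b l => bmin b :: bmax b :: l) []

/-- The number of inversions of a list of naturals. -/
def inversions (l : List ℕ) : ℕ :=
  ∑ i ∈ Finset.range l.length, ∑ j ∈ Finset.range l.length,
    if i < j ∧ l.getD j 0 < l.getD i 0 then 1 else 0

/-- The sign of a perfect matching `M` of a finset of naturals: the sign of the associated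
permutation `σ_𝒫`, i.e. the parity of the number of inversions of the bottom row of its
two-line representation (the top row being the elements of `S` sorted increasingly). -/
def pmSign (M : Finset (Finset ℕ)) : ℤ := (-1) ^ inversions (flatList M)

/-- `S(F, P)`: the sum of the (1-based) positions inside `P` of the elements of `F`, minus
`r (r + 1) / 2` where `r = |F|`. -/
def SP (F P : Finset ℕ) : ℕ :=
  (∑ i ∈ F, ((P.filter (fun p => p < i)).card + 1)) - F.card * (F.card + 1) / 2

/-- `e_T`: the product, in the exterior algebra, of the generators indexed by `T`, taken in
increasing order. -/
noncomputable def eProd (k : Type*) {V : Type*} [Field k] [AddCommGroup V] [Module k V]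
    (e : ℕ → V) (T : Finset ℕ) : ExteriorAlgebra k V :=
  ((T.sort (· ≤ ·)).map (fun i => ExteriorAlgebra.ι k (e i))).prod

/-- `X_R`: the product, in the Clifford algebra, of the generators indexed by `R`, taken in
increasing order. -/
noncomputable def XProd {k V : Type*} [Field k] [AddCommGroup V] [Module k V]
    (q : QuadraticForm k V) (e : ℕ → V) (R : Finset ℕ) : CliffordAlgebra q :=
  ((R.sort (· ≤ ·)).map (fun i => CliffordAlgebra.ι q (e i))).prod

/-- `d_P`: the composition of the skew-derivations indexed by `P`, taken in increasing order. -/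
noncomputable def dComp {k V : Type*} [Field k] [AddCommGroup V] [Module k V]
    {q : QuadraticForm k V} (d : ℕ → Module.End k (CliffordAlgebra q)) (P : Finset ℕ) :
    Module.End k (CliffordAlgebra q) :=
  ((P.sort (· ≤ ·)).map d).prod

/-- `Λ(𝒫)`: the product of `λ_{ab} = polar q (e a) (e b)` over the blocks `{a < b}` of the
matching `M`. -/
noncomputable def lamProd {k V : Type*} [Field k] [AddCommGroup V] [Module k V]
    (q : QuadraticForm k V) (e : ℕ → V) (M : Finset (Finset ℕ)) : k :=
  ∏ bl ∈ M, QuadraticMap.polar q (e (bmin bl)) (e (bmax bl))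

/-- The element `u_Q` of the Clifford algebra. -/
noncomputable def uElem {k V : Type*} [Field k] [AddCommGroup V] [Module k V]
    (q : QuadraticForm k V) (e : ℕ → V) (μ : k) (Q : Finset ℕ) : CliffordAlgebra q :=
  (μ / 2 ^ ((insert 0 Q).card / 2)) •
    ∑ R ∈ (insert 0 Q).powerset.filter (fun R => R.card % 2 = (insert 0 Q).card % 2),
      (((-1 : k) ^ (SP R (insert 0 Q) + ((insert 0 Q).card - R.card) / 2) * 2 ^ (R.card / 2)) *
        ∑ M ∈ perfMatchings ((insert 0 Q) \ R), (pmSign M : k) * lamProd q e M) • XProd q e R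

/-!
Classify the perfect matchings of `S` by the partner `a` of the largest element `m`. The block
`{a, m}` comes last in canonical form, so putting it into a matching of `S \ {a, m}` appends `a, m`
to the bottom row of the permutation, and the new inversions correspond to the elements of
`S \ {a, m}` exceeding `a`. By induction the signed sum is therefore `∑ (-1) ^ i` over
`0 ≤ i < |S| - 1`, and this alternating sum has an odd number of terms.
-/

section PerfectMatching

open Finset

variable {α : Type*} [DecidableEq α] {S T : Finset α} {M : Finset (Finset α)} {b : Finset α}
  {a m : α}

theorem isPerfectMatching_iff : IsPerfectMatching S M ↔
    (∀ b ∈ M, #b = 2) ∧ (M : Set (Finset α)).PairwiseDisjoint id ∧ M.sup id = S :=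
  and_congr_right' <| and_congr_left' ⟨fun h b hb c hc => h b hb c hc, fun h _ hb _ hc => h hb hc⟩

namespace IsPerfectMatching

theorem pairwiseDisjoint (h : IsPerfectMatching S M) : (M : Set (Finset α)).PairwiseDisjoint id :=
  (isPerfectMatching_iff.1 h).2.1

theorem subset (h : IsPerfectMatching S M) (hb : b ∈ M) : b ⊆ S :=
  h.2.2 ▸ le_sup (f := id) hb

theorem exists_pair_mem (h : IsPerfectMatching S M) (hm : m ∈ S) :
    ∃ a, a ≠ m ∧ {a, m} ∈ M := by
  obtain ⟨b, hb, hmb⟩ := mem_sup.1 (h.2.2 ▸ hm)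
  obtain ⟨x, y, hxy, rfl⟩ := card_eq_two.1 (h.1 b hb)
  rcases mem_insert.1 hmb with rfl | hmy
  · exact ⟨y, hxy.symm, pair_comm m y ▸ hb⟩
  · exact ⟨x, by rwa [mem_singleton.1 hmy], by rwa [mem_singleton.1 hmy]⟩

end IsPerfectMatching

theorem isPerfectMatching_insert_iff (hb : #b = 2) (hbM : b ∉ M) :
    IsPerfectMatching S (insert b M) ↔ b ⊆ S ∧ IsPerfectMatching (S \ b) M := by
  have hpair : ((insert b M : Finset (Finset α)) : Set (Finset α)).PairwiseDisjoint id ↔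
      (M : Set (Finset α)).PairwiseDisjoint id ∧ Disjoint b (M.sup id) := by
    rw [coe_insert, Set.pairwiseDisjoint_insert_of_notMem (mem_coe.not.2 hbM),
      Finset.disjoint_sup_right]
    rfl
  have hunion : Disjoint b (M.sup id) ∧ b ∪ M.sup id = S ↔ b ⊆ S ∧ M.sup id = S \ b := by
    constructor
    · rintro ⟨hd, rfl⟩
      exact ⟨subset_union_left, (union_sdiff_cancel_left hd).symm⟩
    · rintro ⟨hbS, hU⟩
      exact hU ▸ ⟨disjoint_sdiff, union_sdiff_of_subset hbS⟩
  rw [isPerfectMatching_iff, isPerfectMatching_iff, forall_mem_insert, hpair, sup_insert, id,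
    sup_eq_union]
  tauto

theorem mem_perfMatchings : M ∈ perfMatchings S ↔ IsPerfectMatching S M := by
  simp only [perfMatchings, mem_filter, mem_powerset, and_iff_right_iff_imp]
  exact fun h b hb => mem_powerset.2 (h.subset hb)

theorem perfMatchings_empty : perfMatchings (∅ : Finset α) = {∅} := by
  ext M
  simp only [mem_perfMatchings, mem_singleton]
  constructor
  · refine fun h => eq_empty_of_forall_notMem fun b hb => ?_
    simpa [subset_empty.1 (h.subset hb)] using h.1 b hb
  · rintro rfl
    simp [IsPerfectMatching]

theorem pair_notMem_of_mem_perfMatchings_erase (hM : M ∈ perfMatchings (T.erase a)) :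
    {a, m} ∉ M := fun hmem =>
  notMem_erase a T ((mem_perfMatchings.1 hM).subset hmem (mem_insert_self a {m}))

theorem insert_pair_mem_perfMatchings_iff (hm : m ∉ T) (ha : a ∈ T) (haM : {a, m} ∉ M) :
    insert {a, m} M ∈ perfMatchings (insert m T) ↔ M ∈ perfMatchings (T.erase a) := by
  have ham : a ≠ m := ne_of_mem_of_not_mem ha hm
  have hsub : {a, m} ⊆ insert m T := by simp [insert_subset_iff, ha]
  have hsdiff : insert m T \ {a, m} = T.erase a := by grind
  rw [mem_perfMatchings, mem_perfMatchings, isPerfectMatching_insert_iff (card_pair ham) haM,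
    and_iff_right hsub, hsdiff]

theorem perfMatchings_insert (hm : m ∉ T) :
    perfMatchings (insert m T) =
      T.biUnion fun a => (perfMatchings (T.erase a)).image (insert {a, m}) := by
  ext M
  simp only [mem_biUnion, mem_image]
  constructor
  · intro hM
    have h := mem_perfMatchings.1 hM
    obtain ⟨a, ham, haM⟩ := h.exists_pair_mem (mem_insert_self m T)
    have ha : a ∈ T := (mem_insert.1 (h.subset haM (mem_insert_self a {m}))).resolve_left ham
    refine ⟨a, ha, M.erase {a, m}, ?_, insert_erase haM⟩
    rwa [← insert_pair_mem_perfMatchings_iff hm ha (notMem_erase _ M), insert_erase haM]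
  · rintro ⟨a, ha, N, hN, rfl⟩
    exact (insert_pair_mem_perfMatchings_iff hm ha
      (pair_notMem_of_mem_perfMatchings_erase hN)).2 hN

theorem sum_perfMatchings_insert {β : Type*} [AddCommMonoid β] (hm : m ∉ T)
    (f : Finset (Finset α) → β) :
    ∑ M ∈ perfMatchings (insert m T), f M =
      ∑ a ∈ T, ∑ M ∈ perfMatchings (T.erase a), f (insert {a, m} M) := by
  rw [perfMatchings_insert hm, sum_biUnion]
  · refine sum_congr rfl fun a _ => sum_image fun M hM N hN hMN => ?_
    rw [← erase_insert (pair_notMem_of_mem_perfMatchings_erase hM), hMN,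
      erase_insert (pair_notMem_of_mem_perfMatchings_erase hN)]
  · refine fun a ha c _ hac => disjoint_left.2 fun _ hM hM' => ?_
    have ham : a ≠ m := ne_of_mem_of_not_mem ha hm
    obtain ⟨M, -, rfl⟩ := mem_image.1 hM
    obtain ⟨N, hN, hNM⟩ := mem_image.1 hM'
    have hpair : {a, m} ∈ N :=
      mem_of_mem_insert_of_ne (hNM ▸ mem_insert_self _ M)
        (mt (insert_inj (notMem_singleton.2 ham)).1 hac)
    have hmem : m ∈ T.erase c := (mem_perfMatchings.1 hN).subset hpair (by simp)
    exact hm (mem_of_mem_erase hmem)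

end PerfectMatching

section CanonicalForm

open Finset

theorem bmax_pair {a m : ℕ} (h : a < m) : bmax {a, m} = m := by
  simp [bmax, h.le]

theorem bmin_pair {a m : ℕ} (h : a < m) : bmin {a, m} = a := by
  rw [bmin, bmax_pair h, pair_comm, erase_insert (notMem_singleton.2 h.ne'), sup_singleton, id]

theorem val_eq_bmin_bmax {b : Finset ℕ} (hb : #b = 2) : b.val = {bmin b, bmax b} := by
  obtain ⟨x, y, hxy, rfl⟩ := card_eq_two.1 hb
  wlog hlt : x < y generalizing x y
  · rw [pair_comm x y] at hb ⊢
    exact this y x hxy.symm hb (hxy.symm.lt_of_le (not_lt.1 hlt))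
  · rw [bmax_pair hlt, bmin_pair hlt, insert_val_of_notMem (notMem_singleton.2 hxy)]
    rfl

theorem bmax_mem {b : Finset ℕ} (hb : #b = 2) : bmax b ∈ b := by
  simp [← mem_val, val_eq_bmin_bmax hb]

theorem sort_insert_of_forall_lt {α : Type*} [LinearOrder α] {T : Finset α} {m : α}
    (hm : ∀ x ∈ T, x < m) : (insert m T).sort (· ≤ ·) = T.sort (· ≤ ·) ++ [m] := by
  have hnodup : (T.sort (· ≤ ·) ++ [m]).Nodup := by
    simpa [List.nodup_append] using fun x hx => (hm x hx).ne
  have hsorted : (T.sort (· ≤ ·) ++ [m]).Pairwise (· ≤ ·) := by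
    simpa [List.pairwise_append, pairwise_sort] using fun x hx => (hm x hx).le
  rw [← (List.toFinset_sort (· ≤ ·) hnodup).2 hsorted]
  congr 1
  ext x
  simp

variable {S : Finset ℕ} {M : Finset (Finset ℕ)} {b : Finset ℕ}

theorem flatList_eq_flatMap (M : Finset (Finset ℕ)) :
    flatList M = (blockList M).flatMap fun b => [bmin b, bmax b] := by
  unfold flatList
  induction blockList M with
  | nil => rfl
  | cons b l ih => rw [List.foldr_cons, List.flatMap_cons, ih, List.cons_append, List.cons_append,
      List.nil_append]

namespace IsPerfectMatching

theorem blockOf_eq {v : ℕ} (h : IsPerfectMatching S M) (hb : b ∈ M) (hv : v ∈ b) :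
    blockOf M v = b := by
  have hfilter : {c ∈ M | v ∈ c} = {b} := by
    refine eq_singleton_iff_unique_mem.2 ⟨mem_filter.2 ⟨hb, hv⟩, fun c hc => ?_⟩
    obtain ⟨hcM, hvc⟩ := mem_filter.1 hc
    exact h.pairwiseDisjoint.elim_finset hcM hb v hvc hv
  rw [blockOf, hfilter, sup_singleton, id]

theorem leftInvOn_blockOf_bmax (h : IsPerfectMatching S M) : Set.LeftInvOn (blockOf M) bmax M :=
  fun _ hb => h.blockOf_eq hb (bmax_mem (h.1 _ hb))

theorem coe_blockList (h : IsPerfectMatching S M) :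
    (blockList M : Multiset (Finset ℕ)) = M.val := by
  rw [blockList, ← Multiset.map_coe, sort_eq, image_val_of_injOn h.leftInvOn_blockOf_bmax.injOn,
    Multiset.map_map]
  exact (Multiset.map_congr rfl h.leftInvOn_blockOf_bmax).trans (Multiset.map_id M.val)

theorem coe_flatList (h : IsPerfectMatching S M) : (flatList M : Multiset ℕ) = S.val := by
  have hS : M.disjiUnion id h.pairwiseDisjoint = S := by
    rw [disjiUnion_eq_biUnion, ← sup_eq_biUnion, h.2.2]
  rw [flatList_eq_flatMap, ← Multiset.coe_bind, h.coe_blockList, ← hS, disjiUnion_val]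
  exact Multiset.bind_congr fun b hb => (val_eq_bmin_bmax (h.1 b hb)).symm

theorem blockList_insert (h : IsPerfectMatching S (insert b M))
    (hmax : ∀ c ∈ M, bmax c < bmax b) : blockList (insert b M) = blockList M ++ [b] := by
  have hbM : b ∉ M := fun hb => lt_irrefl _ (hmax b hb)
  have hM : IsPerfectMatching (S \ b) M :=
    ((isPerfectMatching_insert_iff (h.1 b (mem_insert_self b M)) hbM).1 h).2
  rw [blockList, image_insert, sort_insert_of_forall_lt (forall_mem_image.2 hmax),
    List.map_append, List.map_singleton, h.leftInvOn_blockOf_bmax (mem_insert_self b M), blockList]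
  congr 1
  refine List.map_congr_left fun v hv => ?_
  obtain ⟨c, hc, rfl⟩ := mem_image.1 ((mem_sort _).1 hv)
  rw [h.leftInvOn_blockOf_bmax (mem_insert_of_mem hc), hM.leftInvOn_blockOf_bmax hc]

theorem flatList_insert (h : IsPerfectMatching S (insert b M))
    (hmax : ∀ c ∈ M, bmax c < bmax b) : flatList (insert b M) = flatList M ++ [bmin b, bmax b] := by
  simp only [flatList_eq_flatMap, h.blockList_insert hmax, List.flatMap_append,
    List.flatMap_singleton]

end IsPerfectMatching

end CanonicalForm

section Sign

open Finset

theorem countP_eq_sum_range_getD {α : Type*} (p : α → Prop) [DecidablePred p] (l : List α) (d : α) :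
    l.countP p = ∑ i ∈ range l.length, if p (l.getD i d) then 1 else 0 := by
  induction l with
  | nil => simp
  | cons x l ih =>
    simp only [List.countP_cons, List.length_cons, sum_range_succ', List.getD_cons_succ,
      List.getD_cons_zero, decide_eq_true_eq, ih]

theorem inversions_append_singleton (l : List ℕ) (a : ℕ) :
    inversions (l ++ [a]) = inversions l + l.countP (a < ·) := by
  have hl : ∀ i ∈ range l.length, (l ++ [a]).getD i 0 = l.getD i 0 := fun i hi =>
    List.getD_append _ _ _ _ (mem_range.1 hi)
  have ha : (l ++ [a]).getD l.length 0 = a := by simp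
  have hlast : ∀ j ∈ range (l.length + 1), ¬(l.length < j ∧
      (l ++ [a]).getD j 0 < (l ++ [a]).getD l.length 0) := fun j hj hlt =>
    hlt.1.not_ge (mem_range_succ_iff.1 hj)
  rw [countP_eq_sum_range_getD (a < ·) l 0, inversions, List.length_append, List.length_singleton,
    sum_range_succ, sum_eq_zero fun j hj => if_neg (hlast j hj), add_zero, inversions,
    ← sum_add_distrib]
  refine sum_congr rfl fun i hi => ?_
  rw [sum_range_succ, hl i hi, ha]
  congr 1
  · exact sum_congr rfl fun j hj => by rw [hl j hj]
  · simp only [mem_range.1 hi, true_and]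

variable {S T : Finset ℕ} {M : Finset (Finset ℕ)} {a m : ℕ}

theorem IsPerfectMatching.countP_flatList (h : IsPerfectMatching S M) (p : ℕ → Prop)
    [DecidablePred p] : (flatList M).countP p = #{x ∈ S | p x} := by
  rw [← Multiset.coe_countP, h.coe_flatList, Multiset.countP_eq_card_filter]
  rfl

theorem IsPerfectMatching.pmSign_insert (h : IsPerfectMatching (T.erase a) M) (ha : a ∈ T)
    (hm : ∀ x ∈ T, x < m) :
    pmSign (insert {a, m} M) = (-1) ^ #{x ∈ T | a < x} * pmSign M := by
  have ham : a < m := hm a ha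
  have hins : IsPerfectMatching (insert m T) (insert {a, m} M) :=
    mem_perfMatchings.1 <| (insert_pair_mem_perfMatchings_iff (fun hmT => (hm m hmT).false) ha
      (pair_notMem_of_mem_perfMatchings_erase (mem_perfMatchings.2 h))).2 (mem_perfMatchings.2 h)
  have hmax : ∀ c ∈ M, bmax c < bmax {a, m} := fun c hc => by
    rw [bmax_pair ham]
    exact hm _ (mem_of_mem_erase (h.subset hc (bmax_mem (h.1 c hc))))
  have hflat : flatList (insert {a, m} M) = flatList M ++ [a] ++ [m] := by
    rw [hins.flatList_insert hmax, bmin_pair ham, bmax_pair ham, List.append_assoc]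
    rfl
  have hcount_a : (flatList M).countP (a < ·) = #{x ∈ T | a < x} := by
    rw [h.countP_flatList, filter_erase, erase_eq_of_notMem (by simp)]
  have hcount_m : (flatList M ++ [a]).countP (m < ·) = 0 := by
    rw [List.countP_append, h.countP_flatList, card_eq_zero.2, List.countP_singleton]
    · simp [ham.le]
    · exact filter_eq_empty_iff.2 fun x hx => (hm x (mem_of_mem_erase hx)).not_gt
  rw [pmSign, hflat, inversions_append_singleton, inversions_append_singleton, hcount_a, hcount_m,
    add_zero, pow_add, mul_comm, pmSign]

theorem pmSign_empty : pmSign ∅ = 1 := by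
  simp [pmSign, flatList, blockList, inversions]

theorem sum_pmSign_insert (hm : ∀ x ∈ T, x < m) :
    ∑ M ∈ perfMatchings (insert m T), pmSign M =
      ∑ a ∈ T, (-1) ^ #{x ∈ T | a < x} * ∑ M ∈ perfMatchings (T.erase a), pmSign M := by
  rw [sum_perfMatchings_insert fun hmT => (hm m hmT).false]
  refine sum_congr rfl fun a ha => ?_
  rw [mul_sum]
  exact sum_congr rfl fun M hM => (mem_perfMatchings.1 hM).pmSign_insert ha hm

theorem sum_card_filter_lt {α β : Type*} [LinearOrder α] [AddCommMonoid β] (T : Finset α)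
    (f : ℕ → β) : ∑ a ∈ T, f #{x ∈ T | a < x} = ∑ i ∈ range #T, f i := by
  induction T using Finset.induction_on_min with
  | empty => simp
  | insert a T ha ih =>
    have haT : a ∉ T := fun h => (ha a h).false
    have hcount : ∀ c ∈ T, #{x ∈ insert a T | c < x} = #{x ∈ T | c < x} := fun c hc => by
      rw [filter_insert, if_neg (ha c hc).not_gt]
    have hcount_self : #{x ∈ insert a T | a < x} = #T := by
      rw [filter_insert, if_neg (lt_irrefl a), filter_true_of_mem ha]
    rw [sum_insert haT, hcount_self, sum_congr rfl fun c hc => congrArg f (hcount c hc), ih,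
      card_insert_of_notMem haT, sum_range_succ, add_comm]

end Sign

/-- `Σ_{𝒫 ∈ π₂(S)} sgn(𝒫) = 1` for a finite set `S ⊆ ℕ` of even cardinality. -/
theorem stmt4 (S : Finset ℕ) (hS : Even S.card) :
    ∑ M ∈ perfMatchings S, pmSign M = 1 := by
  induction S using Finset.strongInduction with
  | H S ih =>
    rcases S.eq_empty_or_nonempty with rfl | hne
    · rw [perfMatchings_empty, Finset.sum_singleton, pmSign_empty]
    obtain ⟨m, T, hm, rfl⟩ : ∃ m T, (∀ x ∈ T, x < m) ∧ insert m T = S :=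
      ⟨S.max' hne, S.erase (S.max' hne), fun _ => S.lt_max'_of_mem_erase_max' hne,
        Finset.insert_erase (S.max'_mem hne)⟩
    have hmT : m ∉ T := fun hmem => (hm m hmem).false
    have hodd : ¬Even T.card := by
      rwa [Finset.card_insert_of_notMem hmT, Nat.even_add_one] at hS
    have hrec : ∀ a ∈ T, ∑ M ∈ perfMatchings (T.erase a), pmSign M = 1 := fun a ha =>
      ih (T.erase a) ((Finset.erase_subset a T).trans_ssubset (Finset.ssubset_insert hmT)) <| by
        rwa [← Finset.card_erase_add_one ha, Nat.even_add_one, not_not] at hodd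
    calc
      ∑ M ∈ perfMatchings (insert m T), pmSign M
        = ∑ a ∈ T, (-1) ^ (T.filter (a < ·)).card * ∑ M ∈ perfMatchings (T.erase a), pmSign M :=
          sum_pmSign_insert hm
      _ = ∑ a ∈ T, (-1) ^ (T.filter (a < ·)).card :=
          Finset.sum_congr rfl fun a ha => by rw [hrec a ha, mul_one]
      _ = ∑ i ∈ Finset.range T.card, (-1) ^ i := sum_card_filter_lt T ((-1) ^ ·)
      _ = 1 := by rw [neg_one_geom_sum, if_neg hodd]
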